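/- Let A be the shift operator on L²(ℝ), let N ∈ ℕ, and define the bounded operator Ā on L²(ℝ) by Ā z := A z − N!·⟨1_{[-N,-N+1]}, z⟩·1_{[0,1]}. Then for every p ∈ ℕ and every q ∈ {0, 1, …, N}, Ā^{p(N+1)+q} 1_{[0,1]} = Σ_{j=0}^p (−1)^{p−j}·(N!)^{p−j}·1_{[−j(N+1)−q, −j(N+1)−q+1]} in L²(ℝ). -/

import Mathlib

open MeasureTheory

/-- The indicator function of the interval `[a, b]`, regarded as an element of `L²(ℝ)`. -/
noncomputable def ind (a b : ℝ) : Lp ℝ 2 (volume : Measure ℝ) :=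
  indicatorConstLp 2 (measurableSet_Icc : MeasurableSet (Set.Icc a b))
    (by rw [Real.volume_Icc]; exact ENNReal.ofReal_ne_top) (1 : ℝ)

/-!
Write `e k` for `1_{[-k, -k+1]}`, `T` for the perturbed operator and `c = N!`. By orthonormality
`T` moves `e k` to `e (k + 1)`, except that at `k = N` it also feeds back `-c • e 0`. Hence
`T ^ (N + 1)` sends `e 0` to `e (N + 1) - c • e 0`, and since `e (N + 1)` is shifted freely from
then on, `T ^ (n + (N + 1)) (e 0) = e (n + (N + 1)) - c • T ^ n (e 0)` for every `n`. Unrolling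
this recursion from `T ^ q (e 0) = e q`, `q ≤ N`, gives the sum.
-/

theorem iterate_apply_eq_of_forall_lt {α : Type*} {f : α → α} {e : ℕ → α} {k n : ℕ}
    (h : ∀ i < n, f (e (k + i)) = e (k + i + 1)) : f^[n] (e k) = e (k + n) := by
  induction n with
  | zero => rfl
  | succ n ih =>
    rw [Function.iterate_succ_apply', ih fun i hi => h i (hi.trans n.lt_succ_self),
      h n n.lt_succ_self, add_assoc]

section FeedbackShift

variable {R M : Type*} [Ring R] [AddCommGroup M] [Module R M]
  {T : Module.End R M} {e : ℕ → M} {N : ℕ} {c : R}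

theorem pow_add_apply_zero_of_feedback (hshift : ∀ k ≠ N, T (e k) = e (k + 1))
    (hfeedback : T (e N) = e (N + 1) - c • e 0) (n : ℕ) :
    (T ^ (n + (N + 1))) (e 0) = e (n + (N + 1)) - c • (T ^ n) (e 0) := by
  have reach_N : (T ^ N) (e 0) = e N := by
    rw [Module.End.pow_apply, iterate_apply_eq_of_forall_lt, zero_add]
    intro i hi
    exact hshift _ (by lia)
  have leave_N : (T ^ n) (e (N + 1)) = e (N + 1 + n) := by
    rw [Module.End.pow_apply, iterate_apply_eq_of_forall_lt]
    intro i _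
    exact hshift _ (by lia)
  calc (T ^ (n + (N + 1))) (e 0)
      = (T ^ n) (T ((T ^ N) (e 0))) := by rw [pow_add, pow_succ']; rfl
    _ = (T ^ n) (e (N + 1)) - c • (T ^ n) (e 0) := by rw [reach_N, hfeedback, map_sub, map_smul]
    _ = e (n + (N + 1)) - c • (T ^ n) (e 0) := by rw [leave_N, add_comm]

theorem pow_mul_add_apply_zero_of_feedback (hshift : ∀ k ≠ N, T (e k) = e (k + 1))
    (hfeedback : T (e N) = e (N + 1) - c • e 0) (p : ℕ) {q : ℕ} (hq : q ≤ N) :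
    (T ^ (p * (N + 1) + q)) (e 0) =
      ∑ j ∈ Finset.range (p + 1), (-c) ^ (p - j) • e (j * (N + 1) + q) := by
  induction p with
  | zero =>
    have reach_q : T^[q] (e 0) = e (0 + q) :=
      iterate_apply_eq_of_forall_lt fun i hi => hshift _ (by lia)
    simpa [Module.End.pow_apply] using reach_q
  | succ p ih =>
    have smul_sum : -c • ∑ j ∈ Finset.range (p + 1), (-c) ^ (p - j) • e (j * (N + 1) + q) =
        ∑ j ∈ Finset.range (p + 1), (-c) ^ (p + 1 - j) • e (j * (N + 1) + q) := by
      rw [Finset.smul_sum]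
      refine Finset.sum_congr rfl fun j hj => ?_
      rw [smul_smul, ← pow_succ', Nat.sub_add_comm (Finset.mem_range_succ_iff.mp hj)]
    have exponent_eq : (p + 1) * (N + 1) + q = p * (N + 1) + q + (N + 1) := by ring
    rw [Finset.sum_range_succ, ← smul_sum, ← ih, Nat.sub_self, pow_zero, one_smul, exponent_eq,
      pow_add_apply_zero_of_feedback hshift hfeedback, neg_smul, neg_add_eq_sub]

end FeedbackShift

theorem pow_perturbed_shift_monomial_kernel_general {𝕜 E : Type*} [RCLike 𝕜]
    [NormedAddCommGroup E] [InnerProductSpace 𝕜 E] {e : ℕ → E} (he : Orthonormal 𝕜 e)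
    {A : Module.End 𝕜 E} (hA : ∀ k, A (e k) = e (k + 1)) {N : ℕ} {c : 𝕜} {Abar : Module.End 𝕜 E}
    (hAbar : ∀ z, Abar z = A z - (c * inner 𝕜 (e N) z) • e 0) (p : ℕ) {q : ℕ} (hq : q ≤ N) :
    (Abar ^ (p * (N + 1) + q)) (e 0) =
      ∑ j ∈ Finset.range (p + 1), (-c) ^ (p - j) • e (j * (N + 1) + q) := by
  refine pow_mul_add_apply_zero_of_feedback (fun k hk => ?_) ?_ p hq
  · rw [hAbar, hA, he.inner_eq_zero hk.symm, mul_zero, zero_smul, sub_zero]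
  · rw [hAbar, hA, inner_self_eq_norm_sq_to_K, he.norm_eq_one, RCLike.ofReal_one, one_pow, mul_one]

theorem coeFn_ind (a b : ℝ) : ind a b =ᵐ[volume] (Set.Icc a b).indicator fun _ => (1 : ℝ) :=
  indicatorConstLp_coeFn

theorem inner_ind_ind (a b c d : ℝ) :
    inner ℝ (ind a b) (ind c d) = max (min b d - max a c) 0 := by
  rw [ind, ind, L2.real_inner_indicatorConstLp_one_indicatorConstLp_one measurableSet_Icc
    measurableSet_Icc measure_Icc_lt_top.ne measure_Icc_lt_top.ne, Set.Icc_inter_Icc,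
    Real.volume_real_Icc]

theorem orthonormal_ind_intCast : Orthonormal ℝ fun n : ℤ => ind n (n + 1) := by
  rw [orthonormal_iff_ite]
  intro m n
  rw [inner_ind_ind, min_add_add_right]
  split_ifs with hmn
  · simp [hmn]
  · have gap : (min m n : ℝ) + 1 ≤ max (m : ℝ) n := by
      exact_mod_cast Int.add_one_le_of_lt (min_lt_max.mpr hmn)
    exact max_eq_right (sub_nonpos.mpr gap)

theorem eq_ind_sub_of_ae_eq_comp_add {g : Lp ℝ 2 (volume : Measure ℝ)} {a b t : ℝ}
    (hg : g =ᵐ[volume] fun x => ind a b (x + t)) : g = ind (a - t) (b - t) := by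
  have translated : ∀ᵐ x, ind a b (x + t) = (Set.Icc a b).indicator (fun _ => (1 : ℝ)) (x + t) :=
    (measurePreserving_add_right volume t).quasiMeasurePreserving.ae (coeFn_ind a b)
  apply Lp.ext
  filter_upwards [hg, translated, coeFn_ind (a - t) (b - t)] with x hgx htx hx
  rw [hgx, htx, hx]
  simp only [Set.indicator_apply, Set.mem_Icc, sub_le_iff_le_add, le_sub_iff_add_le]

/-- The functions `1_{[-k, -k+1]}`, `k ∈ ℕ`, as elements of `L²(ℝ)`: the orthonormal sequence
along which the shift moves `1_{[0, 1]}`. -/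
noncomputable def unitInd (k : ℕ) : Lp ℝ 2 (volume : Measure ℝ) :=
  ind (-(k : ℝ)) (-(k : ℝ) + 1)

theorem unitInd_zero : unitInd 0 = ind 0 1 := by
  simp [unitInd]

theorem orthonormal_unitInd : Orthonormal ℝ unitInd := by
  have unitInd_eq_comp : unitInd = (fun n : ℤ => ind n (n + 1)) ∘ (Neg.neg ∘ Nat.cast) := by
    funext k
    simp [unitInd]
  rw [unitInd_eq_comp]
  exact orthonormal_ind_intCast.comp _ (neg_injective.comp Nat.cast_injective)

theorem eq_unitInd_succ_of_ae_eq_comp_add_one {g : Lp ℝ 2 (volume : Measure ℝ)} {k : ℕ}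
    (hg : g =ᵐ[volume] fun x => unitInd k (x + 1)) : g = unitInd (k + 1) := by
  rw [eq_ind_sub_of_ae_eq_comp_add hg, unitInd]
  congr 1 <;> push_cast <;> ring

/-- Let `A` be the shift operator on `L²(ℝ)`, `N ∈ ℕ`, and
`Ā z := A z − N! ⟨1_{[-N,-N+1]}, z⟩ 1_{[0,1]}`.  Then for every `p ∈ ℕ` and `q ∈ {0,…,N}`,
`Ā^{p(N+1)+q} 1_{[0,1]} = ∑_{j=0}^p (−1)^{p−j} (N!)^{p−j} 1_{[−j(N+1)−q, −j(N+1)−q+1]}`. -/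
theorem pow_perturbed_shift_monomial_kernel
    (A : Lp ℝ 2 (volume : Measure ℝ) →L[ℝ] Lp ℝ 2 (volume : Measure ℝ))
    (hA : ∀ f : Lp ℝ 2 (volume : Measure ℝ), (A f : ℝ → ℝ) =ᵐ[volume] fun x => f (x + 1))
    (N : ℕ)
    (Abar : Lp ℝ 2 (volume : Measure ℝ) →L[ℝ] Lp ℝ 2 (volume : Measure ℝ))
    (hAbar : ∀ z, Abar z = A z -
      ((N.factorial : ℝ) * (inner ℝ (ind (-(N : ℝ)) (-(N : ℝ) + 1)) z : ℝ)) • ind 0 1) :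
    ∀ (p q : ℕ), q ≤ N →
      (Abar ^ (p * (N + 1) + q)) (ind 0 1) =
        ∑ j ∈ Finset.range (p + 1),
          ((-1 : ℝ) ^ (p - j) * (N.factorial : ℝ) ^ (p - j)) •
            ind (-((j * (N + 1) + q : ℕ) : ℝ)) (-((j * (N + 1) + q : ℕ) : ℝ) + 1) := by
  intro p q hq
  simp only [← unitInd_zero, ← neg_pow] at hAbar ⊢
  have hA_unitInd (k : ℕ) : A (unitInd k) = unitInd (k + 1) :=
    eq_unitInd_succ_of_ae_eq_comp_add_one (hA (unitInd k))
  rw [← ContinuousLinearMap.coe_coe, ContinuousLinearMap.toLinearMap_pow]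
  exact pow_perturbed_shift_monomial_kernel_general (A := A.toLinearMap) orthonormal_unitInd
    hA_unitInd hAbar p hq
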